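/- arXiv:2205.15280 — 4 statements merged into one kernel-verified Lean document; each statement's English description precedes it below -/
import Mathlib

section
/- Let Y be a real-valued random variable admitting a density f_Y with respect to Lebesgue measure that is symmetric (f_Y(y) = f_Y(-y) for all y) and non-increasing in |y| (i.e., f_Y(y) ≥ f_Y(y') whenever |y| ≤ |y'|), and let F_Y denote its cumulative distribution function. Then for every t > 0 and every x ∈ ℝ, F_Y(t - x) + F_Y(t + x) ≤ 2 F_Y(t); that is, the function φ_t(x) = F_Y(t - x) + F_Y(t + x) attains its maximum at x = 0. -/
open MeasureTheory

theorem stmt0_aux (ν : Measure ℝ) (g : ℝ → ENNReal)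
    (hν : ν = volume.withDensity g)
    (hmono : ∀ y y' : ℝ, |y| ≤ |y'| → g y' ≤ g y) (t : ℝ) (ht : 0 < t) (x : ℝ) (hx : 0 ≤ x) :
    ν (Set.Iic (t - x)) + ν (Set.Iic (t + x)) ≤ 2 * ν (Set.Iic t) := by
  have key : ν (Set.Ioc t (t + x)) ≤ ν (Set.Ioc (t - x) t) := by
    rw [hν, withDensity_apply _ measurableSet_Ioc, withDensity_apply _ measurableSet_Ioc]
    have hp : (fun u : ℝ => 2 * t - u) ⁻¹' (Set.Ico (t - x) t) = Set.Ioc t (t + x) := by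
      ext u
      simp only [Set.mem_preimage, Set.mem_Ico, Set.mem_Ioc]
      constructor <;> rintro ⟨h1, h2⟩ <;> constructor <;> linarith
    have hmp : MeasurePreserving (fun u : ℝ => 2 * t - u) volume volume :=
      Measure.measurePreserving_sub_left volume (2 * t)
    have hr := hmp.setLIntegral_comp_preimage_emb
      (MeasurableEquiv.subLeft (2 * t)).measurableEmbedding g (Set.Ico (t - x) t)
    rw [hp] at hr
    calc ∫⁻ u in Set.Ioc t (t + x), g u
        ≤ ∫⁻ u in Set.Ioc t (t + x), g (2 * t - u) := by
          refine setLIntegral_mono' measurableSet_Ioc fun u hu => hmono _ _ ?_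
          rw [abs_of_pos (ht.trans hu.1), abs_le]
          constructor <;> linarith [hu.1]
      _ = ∫⁻ u in Set.Ico (t - x) t, g u := hr
      _ = ∫⁻ u in Set.Ioc (t - x) t, g u := setLIntegral_congr Ico_ae_eq_Ioc
  have e1 : ν (Set.Iic (t + x)) ≤ ν (Set.Iic t) + ν (Set.Ioc t (t + x)) := by
    rw [← Set.Iic_union_Ioc_eq_Iic (show t ≤ t + x by linarith)]
    exact measure_union_le _ _
  have e2 : ν (Set.Iic t) = ν (Set.Iic (t - x)) + ν (Set.Ioc (t - x) t) := by
    rw [← measure_union _ measurableSet_Ioc, Set.Iic_union_Ioc_eq_Iic (by linarith)]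
    exact Set.Iic_disjoint_Ioc le_rfl
  calc ν (Set.Iic (t - x)) + ν (Set.Iic (t + x))
      ≤ ν (Set.Iic (t - x)) + (ν (Set.Iic t) + ν (Set.Ioc (t - x) t)) := by
        gcongr
        exact e1.trans (by gcongr)
    _ = 2 * ν (Set.Iic t) := by
        rw [two_mul, e2]; ring

/-- If a real random variable `Y` has a density `fY` (w.r.t. Lebesgue measure) that is
symmetric about `0` and non-increasing in `|y|`, then for every `t > 0` and every `x`,
`F_Y(t - x) + F_Y(t + x) ≤ 2 F_Y(t)`, where `F_Y` is the CDF of `Y`. -/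
theorem stmt0 {Ω : Type*} [MeasurableSpace Ω] (ℙ : Measure Ω) [IsProbabilityMeasure ℙ]
    (Y : Ω → ℝ) (hY : Measurable Y) (fY : ℝ → ℝ) (hfY_nonneg : ∀ y, 0 ≤ fY y)
    (hdensity : Measure.map Y ℙ = volume.withDensity (fun y => ENNReal.ofReal (fY y)))
    (hsymm : ∀ y, fY (-y) = fY y)
    (hmono : ∀ y y' : ℝ, |y| ≤ |y'| → fY y' ≤ fY y) :
    ∀ t : ℝ, 0 < t → ∀ x : ℝ,
      ℙ (Y ⁻¹' Set.Iic (t - x)) + ℙ (Y ⁻¹' Set.Iic (t + x)) ≤ 2 * ℙ (Y ⁻¹' Set.Iic t) := by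
  intro t ht x
  simp only [← Measure.map_apply hY measurableSet_Iic]
  have hm : ∀ y y' : ℝ, |y| ≤ |y'| → ENNReal.ofReal (fY y') ≤ ENNReal.ofReal (fY y) :=
    fun y y' h => ENNReal.ofReal_le_ofReal (hmono y y' h)
  rcases le_total 0 x with hx | hx
  · exact stmt0_aux _ _ hdensity hm t ht x hx
  · have h := stmt0_aux _ _ hdensity hm t ht (-x) (by linarith)
    rw [sub_neg_eq_add, ← sub_eq_add_neg, add_comm] at h
    exact h
end

section
/- Let X and Y be independent real-valued random variables, where Y admits a density f_Y with respect to Lebesgue measure that is symmetric (f_Y(y) = f_Y(-y) for all y) and non-increasing in |y|. Then for every t > 0, P(|X + Y| ≥ t) ≥ P(|Y| ≥ t). -/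
open MeasureTheory

/-- Pointwise (fixed shift) version. -/
theorem shift_aux (f : ℝ → ENNReal) (hmono : ∀ y y' : ℝ, |y| ≤ |y'| → f y' ≤ f y)
    (t : ℝ) (ht : 0 < t) (x : ℝ) :
    (volume.withDensity f) {y | t ≤ |y|} ≤ (volume.withDensity f) {y | t ≤ |x + y|} := by
  have hA : MeasurableSet {y : ℝ | t ≤ |y|} := measurableSet_le (by fun_prop) (by fun_prop)
  have hB : MeasurableSet {y : ℝ | t ≤ |x + y|} := measurableSet_le (by fun_prop) (by fun_prop)
  set A := {y : ℝ | t ≤ |y|} with hAdef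
  set B := {y : ℝ | t ≤ |x + y|} with hBdef
  have hAc : Aᶜ = Set.Ioo (-t) t := by
    ext y; simp [hAdef, abs_lt]
  have hBc : Bᶜ = Set.Ioo (-t - x) (t - x) := by
    ext y
    simp only [hBdef, Set.mem_compl_iff, Set.mem_setOf_eq, not_le, abs_lt, Set.mem_Ioo]
    constructor <;> rintro ⟨h1, h2⟩ <;> constructor <;> linarith
  have hvAc : volume Aᶜ = ENNReal.ofReal (2 * t) := by
    rw [hAc, Real.volume_Ioo]; congr 1; ring
  have hvBc : volume Bᶜ = ENNReal.ofReal (2 * t) := by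
    rw [hBc, Real.volume_Ioo]; congr 1; ring
  have hvol : volume (A \ B) = volume (B \ A) := by
    have e1 := measure_inter_add_diff (μ := volume) Bᶜ hA.compl
    have e2 := measure_inter_add_diff (μ := volume) Aᶜ hB.compl
    rw [Set.inter_comm] at e2
    have d1 : Bᶜ \ Aᶜ = A \ B := by ext; simp [and_comm]
    have d2 : Aᶜ \ Bᶜ = B \ A := by ext; simp [and_comm]
    rw [d1, hvBc] at e1
    rw [d2, hvAc, ← e1] at e2
    have hfin : volume (Bᶜ ∩ Aᶜ) ≠ ⊤ := by
      refine ne_top_of_le_ne_top ?_ (measure_mono Set.inter_subset_left)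
      rw [hvBc]; exact ENNReal.ofReal_ne_top
    exact ((ENNReal.add_right_inj hfin).1 e2).symm
  have hdiff : (volume.withDensity f) (A \ B) ≤ (volume.withDensity f) (B \ A) := by
    rw [withDensity_apply _ (hA.diff hB), withDensity_apply _ (hB.diff hA)]
    calc ∫⁻ y in A \ B, f y ≤ ∫⁻ _ in A \ B, f t := by
          refine setLIntegral_mono' (hA.diff hB) fun y hy => hmono _ _ ?_
          rw [abs_of_pos ht]; exact hy.1
      _ = ∫⁻ _ in B \ A, f t := by
          rw [setLIntegral_const, setLIntegral_const, hvol]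
      _ ≤ ∫⁻ y in B \ A, f y := by
          refine setLIntegral_mono' (hB.diff hA) fun y hy => hmono _ _ ?_
          rw [abs_of_pos ht]; exact (not_le.1 hy.2).le
  rw [← measure_inter_add_diff A hB, ← measure_inter_add_diff B hA, Set.inter_comm B A]
  gcongr

/-- If `X` and `Y` are independent real random variables and `Y` has a density `fY`
(w.r.t. Lebesgue measure) that is symmetric about `0` and non-increasing in `|y|`, then
for every `t > 0`, `P(|X + Y| ≥ t) ≥ P(|Y| ≥ t)`. -/
theorem stmt1 {Ω : Type*} [MeasurableSpace Ω] (ℙ : Measure Ω) [IsProbabilityMeasure ℙ]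
    (X Y : Ω → ℝ) (hX : Measurable X) (hY : Measurable Y)
    (hindep : ProbabilityTheory.IndepFun X Y ℙ)
    (fY : ℝ → ℝ) (hfY_nonneg : ∀ y, 0 ≤ fY y)
    (hdensity : Measure.map Y ℙ = volume.withDensity (fun y => ENNReal.ofReal (fY y)))
    (hsymm : ∀ y, fY (-y) = fY y)
    (hmono : ∀ y y' : ℝ, |y| ≤ |y'| → fY y' ≤ fY y) :
    ∀ t : ℝ, 0 < t →
      ℙ {ω | t ≤ |Y ω|} ≤ ℙ {ω | t ≤ |X ω + Y ω|} := by
  intro t ht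
  have := Measure.isProbabilityMeasure_map (μ := ℙ) hX.aemeasurable
  have := Measure.isProbabilityMeasure_map (μ := ℙ) hY.aemeasurable
  have hA : MeasurableSet {y : ℝ | t ≤ |y|} := measurableSet_le (by fun_prop) (by fun_prop)
  have hS : MeasurableSet {p : ℝ × ℝ | t ≤ |p.1 + p.2|} :=
    measurableSet_le (by fun_prop) (by fun_prop)
  have hprod := (ProbabilityTheory.indepFun_iff_map_prod_eq_prod_map_map
    hX.aemeasurable hY.aemeasurable).1 hindep
  have h1 : ℙ {ω | t ≤ |Y ω|} = (ℙ.map Y) {y : ℝ | t ≤ |y|} := by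
    rw [Measure.map_apply hY hA]; rfl
  have h2 : ℙ {ω | t ≤ |X ω + Y ω|}
      = ((ℙ.map X).prod (ℙ.map Y)) {p : ℝ × ℝ | t ≤ |p.1 + p.2|} := by
    rw [← hprod, Measure.map_apply (hX.prodMk hY) hS]; rfl
  rw [h1, h2, Measure.prod_apply hS]
  calc (ℙ.map Y) {y : ℝ | t ≤ |y|} = ∫⁻ _, (ℙ.map Y) {y : ℝ | t ≤ |y|} ∂(ℙ.map X) := by
        simp
    _ ≤ _ := by
        refine lintegral_mono fun x => ?_
        rw [hdensity]
        exact shift_aux _ (fun y y' h => ENNReal.ofReal_le_ofReal (hmono y y' h)) t ht x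
end

section
/- Let X and Y be independent real-valued random variables, where Y admits a density f_Y with respect to Lebesgue measure that is symmetric (f_Y(y) = f_Y(-y) for all y) and strictly decreasing in |y| (i.e., f_Y(y) > f_Y(y') whenever |y| < |y'|), and suppose P(X ≠ 0) > 0. Then for every t > 0, P(|X + Y| ≥ t) > P(|Y| ≥ t). -/
open MeasureTheory

lemma shift_aux_s2 (fY : ℝ → ℝ) (hm : Measurable fY) (hfY_nonneg : ∀ y, 0 ≤ fY y)
    (ν : Measure ℝ) [IsProbabilityMeasure ν]
    (hdensity : ν = volume.withDensity (fun y => ENNReal.ofReal (fY y)))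
    (hsymm : ∀ y, fY (-y) = fY y)
    (hstrict : ∀ y y' : ℝ, |y| < |y'| → fY y' < fY y)
    (t : ℝ) (ht : 0 < t) (x : ℝ) (hx : x ≠ 0) :
    ν {y | t ≤ |y|} < ν {y | t ≤ |x + y|} := by
  have hA : MeasurableSet {y : ℝ | t ≤ |y|} := measurableSet_le (by fun_prop) (by fun_prop)
  have hB : MeasurableSet {y : ℝ | t ≤ |x + y|} := measurableSet_le (by fun_prop) (by fun_prop)
  set A := {y : ℝ | t ≤ |y|} with hAd
  set B := {y : ℝ | t ≤ |x + y|} with hBd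
  have hfm : Measurable (fun y => ENNReal.ofReal (fY y)) := hm.ennreal_ofReal
  have h1 : ν (A \ B) = ∫⁻ y in B \ A, ENNReal.ofReal (fY (-x - y)) := by
    rw [hdensity, withDensity_apply _ (hA.diff hB), ← lintegral_indicator (hA.diff hB),
      ← lintegral_indicator (hB.diff hA), ← lintegral_sub_left_eq_self _ (-x)]
    congr 1
    ext y
    have e1 : (-x - y ∈ A \ B) ↔ y ∈ B \ A := by
      have a1 : |-x - y| = |x + y| := by rw [← abs_neg]; ring_nf
      have a2 : |x + (-x - y)| = |y| := by rw [← abs_neg]; ring_nf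
      simp only [hAd, hBd, Set.mem_diff, Set.mem_setOf_eq, a1, a2]
    by_cases h : y ∈ B \ A
    · rw [Set.indicator_of_mem h, Set.indicator_of_mem (e1.2 h)]
    · rw [Set.indicator_of_notMem h, Set.indicator_of_notMem (fun h' => h (e1.1 h'))]
  have h2 : ν (B \ A) = ∫⁻ y in B \ A, ENNReal.ofReal (fY y) := by
    rw [hdensity, withDensity_apply _ (hB.diff hA)]
  have hpos : volume (B \ A) ≠ 0 := by
    rcases lt_or_gt_of_ne hx with h | h
    · have : Set.Ioo (-t) (min t (-t - x)) ⊆ B \ A := by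
        intro y hy
        obtain ⟨h3, h4⟩ := hy
        rw [lt_min_iff] at h4
        refine ⟨?_, ?_⟩
        · show t ≤ |x + y|
          rw [le_abs]; right; linarith
        · show ¬ t ≤ |y|
          rw [not_le, abs_lt]; exact ⟨h3, h4.1⟩
      refine ((lt_of_lt_of_le ?_ (measure_mono this)).ne')
      rw [Real.volume_Ioo, ENNReal.ofReal_pos, sub_pos, lt_min_iff]
      constructor <;> linarith
    · have : Set.Ioo (max (-t) (t - x)) t ⊆ B \ A := by
        intro y hy
        obtain ⟨h3, h4⟩ := hy
        rw [max_lt_iff] at h3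
        refine ⟨?_, ?_⟩
        · show t ≤ |x + y|
          rw [le_abs]; left; linarith
        · show ¬ t ≤ |y|
          rw [not_le, abs_lt]; exact ⟨h3.1, h4⟩
      refine ((lt_of_lt_of_le ?_ (measure_mono this)).ne')
      rw [Real.volume_Ioo, ENNReal.ofReal_pos, sub_pos, max_lt_iff]
      constructor <;> linarith
  have h3 : ν (A \ B) < ν (B \ A) := by
    have hfin : ν (A \ B) ≠ ⊤ := measure_ne_top _ _
    rw [h1] at hfin
    rw [h1, h2]
    refine setLIntegral_strict_mono (hB.diff hA) hpos hfm hfin ?_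
    filter_upwards with y hy
    have hlt : fY (-x - y) < fY y := by
      apply hstrict
      have a1 : |-x - y| = |x + y| := by rw [← abs_neg]; ring_nf
      rw [a1]
      exact lt_of_lt_of_le (not_le.1 hy.2) hy.1
    exact (ENNReal.ofReal_lt_ofReal_iff (lt_of_le_of_lt (hfY_nonneg _) hlt)).2 hlt
  rw [← measure_inter_add_diff A hB, ← measure_inter_add_diff B hA, Set.inter_comm B A]
  exact ENNReal.add_lt_add_left (measure_ne_top _ _) h3


/-- If `X` and `Y` are independent real random variables, `Y` has a density `fY`
(w.r.t. Lebesgue measure) that is symmetric about `0` and strictly decreasing in `|y|`,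
and `P(X ≠ 0) > 0`, then for every `t > 0`, `P(|X + Y| ≥ t) > P(|Y| ≥ t)`. -/
theorem stmt2 {Ω : Type*} [MeasurableSpace Ω] (ℙ : Measure Ω) [IsProbabilityMeasure ℙ]
    (X Y : Ω → ℝ) (hX : Measurable X) (hY : Measurable Y)
    (hindep : ProbabilityTheory.IndepFun X Y ℙ)
    (fY : ℝ → ℝ) (hfY_nonneg : ∀ y, 0 ≤ fY y)
    (hdensity : Measure.map Y ℙ = volume.withDensity (fun y => ENNReal.ofReal (fY y)))
    (hsymm : ∀ y, fY (-y) = fY y)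
    (hstrict : ∀ y y' : ℝ, |y| < |y'| → fY y' < fY y)
    (hX0 : 0 < ℙ {ω | X ω ≠ 0}) :
    ∀ t : ℝ, 0 < t →
      ℙ {ω | t ≤ |Y ω|} < ℙ {ω | t ≤ |X ω + Y ω|} := by
  intro t ht
  have hm : Measurable fY := by
    have hg : Antitone (fun r : ℝ => fY (max r 0)) := by
      intro a b hab
      have h := max_le_max_right 0 hab
      rcases h.eq_or_lt with h | h
      · simp only [h]; exact le_rfl
      · refine (hstrict _ _ ?_).le
        rwa [abs_of_nonneg (le_max_right _ _), abs_of_nonneg (le_max_right _ _)]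
    have : fY = (fun r : ℝ => fY (max r 0)) ∘ (fun y => |y|) := by
      ext y
      simp only [Function.comp, max_eq_left (abs_nonneg y)]
      rcases abs_choice y with h | h <;> rw [h]
      rw [hsymm]
    rw [this]
    exact hg.measurable.comp measurable_abs
  have : IsProbabilityMeasure (Measure.map Y ℙ) := Measure.isProbabilityMeasure_map hY.aemeasurable
  have : IsProbabilityMeasure (Measure.map X ℙ) := Measure.isProbabilityMeasure_map hX.aemeasurable
  have key := shift_aux_s2 fY hm hfY_nonneg (Measure.map Y ℙ) hdensity hsymm hstrict t ht
  have hS : MeasurableSet {p : ℝ × ℝ | t ≤ |p.1 + p.2|} :=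
    measurableSet_le (by fun_prop) (by fun_prop)
  have hA : MeasurableSet {y : ℝ | t ≤ |y|} := measurableSet_le (by fun_prop) (by fun_prop)
  have e1 : ℙ {ω | t ≤ |Y ω|} = Measure.map Y ℙ {y | t ≤ |y|} := by
    rw [Measure.map_apply hY hA]; rfl
  have e2 : ℙ {ω | t ≤ |X ω + Y ω|}
      = ∫⁻ x, Measure.map Y ℙ {y | t ≤ |x + y|} ∂(Measure.map X ℙ) := by
    have h := (ProbabilityTheory.indepFun_iff_map_prod_eq_prod_map_map
      hX.aemeasurable hY.aemeasurable).1 hindep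
    have h' := Measure.map_apply (μ := ℙ) (hX.prodMk hY) hS
    rw [h, Measure.prod_apply hS] at h'
    exact h'.symm
  have e3 : Measure.map Y ℙ {y | t ≤ |y|}
      = ∫⁻ x, Measure.map Y ℙ {y | t ≤ |y|} ∂(Measure.map X ℙ) := by simp
  rw [e1, e2, e3]
  have hne : MeasurableSet {x : ℝ | x ≠ 0} := (measurableSet_singleton 0).compl
  refine lintegral_strict_mono_of_ae_le_of_ae_lt_on (s := {x : ℝ | x ≠ 0})
    (measurable_measure_prodMk_left hS).aemeasurable ?_ ?_ ?_ ?_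
  · rw [← e3]; exact measure_ne_top _ _
  · filter_upwards with x
    by_cases hx : x = 0
    · simp [hx]
    · exact (key x hx).le
  · rw [Measure.map_apply hX hne]
    exact hX0.ne'
  · filter_upwards with x hx
    exact key x hx
end

section
/- Let 0 < p < q < 1. For each n, let X_n be a Binomial(n, p) random variable with cumulative distribution function F_{X_n}, and let Y_n be a Binomial(n, q) random variable. Then F_{X_n}(Y_n) converges to 1 in probability: for every δ > 0, P(F_{X_n}(Y_n) < 1 - δ) → 0 as n → ∞. -/
open MeasureTheory Filter

/-- Chebyshev bound for binomial sums. -/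
lemma cheb_aux (x : ℝ) (hx0 : 0 < x) (hx1 : x < 1) (n : ℕ) (hn : 0 < n) (d : ℝ) (hd : 0 < d)
    (S : Finset ℕ) (hS : S ⊆ Finset.range (n + 1))
    (h : ∀ k ∈ S, (d * n) ^ 2 ≤ (n * x - k) ^ 2) :
    ∑ k ∈ S, (n.choose k : ℝ) * x ^ k * (1 - x) ^ (n - k) ≤ 1 / d ^ 2 / n := by
  have hv := congrArg (Polynomial.eval x) (bernsteinPolynomial.variance ℝ n)
  simp only [Polynomial.eval_finset_sum, bernsteinPolynomial] at hv
  simp at hv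
  have hn' : (0 : ℝ) < n := by exact_mod_cast hn
  have hb : ∀ k, 0 ≤ (n.choose k : ℝ) * x ^ k * (1 - x) ^ (n - k) := fun k => by
    have : 0 ≤ 1 - x := by linarith
    positivity
  have h1 : (d * n) ^ 2 * ∑ k ∈ S, (n.choose k : ℝ) * x ^ k * (1 - x) ^ (n - k)
      ≤ n * x * (1 - x) := by
    rw [← hv, Finset.mul_sum]
    refine (Finset.sum_le_sum fun k hk => mul_le_mul_of_nonneg_right (h k hk) (hb k)).trans ?_
    exact Finset.sum_le_sum_of_subset_of_nonneg hS
      fun k _ _ => mul_nonneg (sq_nonneg _) (hb k)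
  have h2 : n * x * (1 - x) ≤ n := by nlinarith [mul_pos hn' hx0, mul_pos hn' (sub_pos.2 hx1)]
  rw [div_div, le_div_iff₀ (by positivity)]
  have h3 := h1.trans h2
  refine le_of_mul_le_mul_left ?_ hn'
  linarith

lemma total_aux (x : ℝ) (n : ℕ) :
    ∑ k ∈ Finset.range (n + 1), (n.choose k : ℝ) * x ^ k * (1 - x) ^ (n - k) = 1 := by
  have h := add_pow x (1 - x) n
  simp only [add_sub_cancel, one_pow] at h
  refine Eq.trans ?_ h.symm
  exact Finset.sum_congr rfl fun k _ => by ring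

/-- Let `0 < p < q < 1`. For each `n`, let `F n` be the CDF of a `Binomial(n, p)` variable,
i.e. `F n k = ∑_{i ≤ k} C(n,i) p^i (1-p)^(n-i)`, and let `Y n` be a `Binomial(n, q)` random
variable. Then `F n (Y n)` converges to `1` in probability: for every `δ > 0`,
`P(F n (Y n) < 1 - δ) → 0` as `n → ∞`. -/
theorem stmt4 {Ω : Type*} [MeasurableSpace Ω] (ℙ : Measure Ω) [IsProbabilityMeasure ℙ]
    (p q : ℝ) (hp : 0 < p) (hpq : p < q) (hq : q < 1)
    (F : ℕ → ℕ → ℝ)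
    (hF : ∀ n k, F n k = ∑ i ∈ Finset.range (k + 1),
      (n.choose i : ℝ) * p ^ i * (1 - p) ^ (n - i))
    (Y : ℕ → Ω → ℕ) (hYmeas : ∀ n, Measurable (Y n))
    (hlaw : ∀ n k, ℙ {ω | Y n ω = k} =
      ENNReal.ofReal ((n.choose k : ℝ) * q ^ k * (1 - q) ^ (n - k))) :
    ∀ δ : ℝ, 0 < δ →
      Tendsto (fun n => ℙ {ω | F n (Y n ω) < 1 - δ}) atTop (nhds 0) := by
  intro δ hδ
  set d : ℝ := (q - p) / 2 with hd
  have hd0 : 0 < d := by rw [hd]; linarith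
  have hlim : Tendsto (fun n : ℕ => 1 / d ^ 2 / (n : ℝ)) atTop (nhds 0) :=
    tendsto_const_div_atTop_nhds_zero_nat _
  have hlim2 := ENNReal.tendsto_ofReal hlim
  rw [ENNReal.ofReal_zero] at hlim2
  refine tendsto_of_tendsto_of_tendsto_of_le_of_le' tendsto_const_nhds hlim2
    (Eventually.of_forall fun _ => zero_le) ?_
  filter_upwards [hlim.eventually_lt_const hδ, eventually_gt_atTop 0] with n hnδ hn
  have hn' : (0 : ℝ) < n := by exact_mod_cast hn
  have hdn : 0 < d * n := by positivity
  have key : ∀ k : ℕ, F n k < 1 - δ → (k : ℝ) < (p + q) / 2 * n := by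
    intro k hk
    by_contra hcon
    push Not at hcon
    have hc := cheb_aux p hp (hpq.trans hq) n hn d hd0
      ((Finset.range (n + 1)).filter (fun i => k < i)) (Finset.filter_subset _ _) (by
        intro i hi
        have hi' : (k : ℝ) < i := by exact_mod_cast (Finset.mem_filter.1 hi).2
        have : d * n ≤ i - n * p := by rw [hd]; linarith
        nlinarith)
    have ht := total_aux p n
    rw [← Finset.sum_filter_add_sum_filter_not _ (fun i => k < i)] at ht
    have hle : ∑ i ∈ (Finset.range (n + 1)).filter (fun i => ¬ k < i),
        (n.choose i : ℝ) * p ^ i * (1 - p) ^ (n - i) ≤ F n k := by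
      rw [hF]
      refine Finset.sum_le_sum_of_subset_of_nonneg ?_ ?_
      · intro i hi
        simp only [Finset.mem_filter, Finset.mem_range] at hi ⊢
        omega
      · intro i _ _
        have : 0 ≤ 1 - p := by linarith
        positivity
    linarith
  set S := (Finset.range (n + 1)).filter (fun i : ℕ => (i : ℝ) < (p + q) / 2 * n) with hS
  have hsub : {ω | F n (Y n ω) < 1 - δ} ⊆ ⋃ k ∈ S, {ω | Y n ω = k} := by
    intro ω hω
    have h1 := key _ hω
    have h2 : (Y n ω : ℝ) < n := by nlinarith
    have h3 : Y n ω < n := by exact_mod_cast h2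
    simp only [Set.mem_iUnion, Set.mem_setOf_eq]
    refine ⟨Y n ω, ?_, rfl⟩
    rw [hS, Finset.mem_filter, Finset.mem_range]
    exact ⟨by omega, h1⟩
  refine (measure_mono hsub).trans ((measure_biUnion_finset_le _ _).trans ?_)
  simp only [hlaw]
  rw [← ENNReal.ofReal_sum_of_nonneg]
  · apply ENNReal.ofReal_le_ofReal
    refine cheb_aux q (hp.trans hpq) hq n hn d hd0 S (Finset.filter_subset _ _) ?_
    intro i hi
    have hi' := (Finset.mem_filter.1 hi).2
    have : d * n ≤ n * q - i := by rw [hd]; linarith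
    nlinarith
  · intro i _
    have : 0 ≤ 1 - q := by linarith
    have : 0 < q := hp.trans hpq
    positivity
end
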